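/- Let 0 < s ≤ 1, p ∈ [1,∞), ℓ ∈ ℝ. Let ε_n ∈ (0,1] with ε_n → 0, and for each n let f_n : ε_nℤ² → ℝ satisfy M := sup_n ‖f_n‖_{W^{s,p}_ℓ(ε_nℤ²)} < ∞. Suppose E^{ε_n} f_n → f in L^p_ℓ(ℝ²). Then there is a constant C > 0, depending only on s, p, ℓ, such that ‖f‖_{L^p_ℓ(ℝ²)} + sup{ |h|^{−s} ‖f(·+h) − f‖_{L^p_ℓ(ℝ²)} : h ∈ ℝ², 0 < |h| ≤ 1 } ≤ C·M; in particular f belongs to the weighted Besov space B^s_{p,∞,ℓ}(ℝ²). -/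

import Mathlib

open MeasureTheory
open scoped ENNReal

/-- The polynomial weight `ρ_ℓ(y) = (1+|y|²)^{-ℓ/2}` on `ℝ²`. -/
noncomputable def rho2 (ℓ : ℝ) (y : ℝ × ℝ) : ℝ := (1 + y.1 ^ 2 + y.2 ^ 2) ^ (-ℓ / 2)

/-- The lattice point `(εn₁, εn₂) ∈ εℤ² ⊂ ℝ²` indexed by `n ∈ ℤ²`. -/
noncomputable def pt (ε : ℝ) (n : ℤ × ℤ) : ℝ × ℝ := (ε * (n.1 : ℝ), ε * (n.2 : ℝ))

/-- The square `Q_ε(z) = (z₁-ε/2, z₁+ε/2] × (z₂-ε/2, z₂+ε/2]`. -/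
def Qeps (ε : ℝ) (z : ℝ × ℝ) : Set (ℝ × ℝ) :=
  Set.Ioc (z.1 - ε / 2) (z.1 + ε / 2) ×ˢ Set.Ioc (z.2 - ε / 2) (z.2 + ε / 2)

/-- The discretization operator `D^ε f(z) = ε⁻² ∫_{Q_ε(z)} f(x) dx`. -/
noncomputable def Deps (ε : ℝ) (f : ℝ × ℝ → ℝ) (n : ℤ × ℤ) : ℝ :=
  (ε ^ 2)⁻¹ * ∫ x in Qeps ε (pt ε n), f x

/-- The index of the cell `Q_ε(z)` containing `t` in one coordinate:
`t ∈ (εn - ε/2, εn + ε/2]` iff `n = ⌈t/ε - 1/2⌉`. -/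
noncomputable def cellIdx (ε t : ℝ) : ℤ := ⌈t / ε - 1 / 2⌉

/-- The extension operator `E^ε`, producing the piecewise constant function with
`E^ε f = f(z)` on `Q_ε(z)`. -/
noncomputable def Eeps (ε : ℝ) (f : ℤ × ℤ → ℝ) (x : ℝ × ℝ) : ℝ :=
  f (cellIdx ε x.1, cellIdx ε x.2)

/-- The weighted norm `‖g‖_{L^p_ℓ(ℝ²)} = (∫_{ℝ²} |ρ_ℓ(x) g(x)|^p dx)^{1/p}`,
valued in `ℝ≥0∞`. -/
noncomputable def lpNormR2 (p ℓ : ℝ) (g : ℝ × ℝ → ℝ) : ℝ≥0∞ :=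
  (∫⁻ x : ℝ × ℝ, ENNReal.ofReal (|rho2 ℓ x * g x| ^ p)) ^ (1 / p)

/-- The weighted lattice norm `‖f‖_{L^p_ℓ(εℤ²)} = (ε² Σ_{z∈εℤ²} |ρ_ℓ(z) f(z)|^p)^{1/p}`,
valued in `ℝ≥0∞`. -/
noncomputable def lpNormLat (p ℓ ε : ℝ) (f : ℤ × ℤ → ℝ) : ℝ≥0∞ :=
  (ENNReal.ofReal (ε ^ 2) *
    ∑' n : ℤ × ℤ, ENNReal.ofReal (|rho2 ℓ (pt ε n) * f n| ^ p)) ^ (1 / p)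

/-- The Euclidean length of a point of `ℝ²`. -/
noncomputable def en2 (y : ℝ × ℝ) : ℝ := Real.sqrt (y.1 ^ 2 + y.2 ^ 2)

/-- The weighted lattice `L^p_ℓ` norm of the difference `f(·+k) − f`. -/
noncomputable def latDiffNorm (p ℓ ε : ℝ) (f : ℤ × ℤ → ℝ) (k : ℤ × ℤ) : ℝ≥0∞ :=
  (ENNReal.ofReal (ε ^ 2) *
    ∑' n : ℤ × ℤ, ENNReal.ofReal (rho2 ℓ (pt ε n) ^ p * |f (n + k) - f n| ^ p)) ^ (1 / p)

/-- The lattice fractional Sobolev norm `‖f‖_{W^{s,p}_ℓ(εℤ²)} = ‖f‖_{L^p_ℓ(εℤ²)} +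
sup{ |k|^{-s} ‖f(·+k) − f‖_{L^p_ℓ(εℤ²)} : k ∈ εℤ², 0 < |k| ≤ 1 }`. -/
noncomputable def latWNorm (s p ℓ ε : ℝ) (f : ℤ × ℤ → ℝ) : ℝ≥0∞ :=
  lpNormLat p ℓ ε f +
    ⨆ (k : ℤ × ℤ) (_ : 0 < en2 (pt ε k) ∧ en2 (pt ε k) ≤ 1),
      ENNReal.ofReal (en2 (pt ε k) ^ (-s)) * latDiffNorm p ℓ ε f k

/-- The difference-quotient norm of the weighted Besov space `B^s_{p,∞,ℓ}(ℝ²)`: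
`‖g‖_{L^p_ℓ} + sup{ |h|^{-s} ‖g(·+h) − g‖_{L^p_ℓ} : h ∈ ℝ², 0 < |h| ≤ 1 }`. -/
noncomputable def besovDiffNormR2 (s p ℓ : ℝ) (g : ℝ × ℝ → ℝ) : ℝ≥0∞ :=
  lpNormR2 p ℓ g +
    ⨆ (h : ℝ × ℝ) (_ : 0 < en2 h ∧ en2 h ≤ 1),
      ENNReal.ofReal (en2 h ^ (-s)) * lpNormR2 p ℓ (fun x => g (x + h) - g x)

/-- Comparison constant for the weight. -/
noncomputable def KK (ℓ : ℝ) : ℝ := 5 ^ (|ℓ| / 2)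

lemma KK_pos (ℓ : ℝ) : 0 < KK ℓ := by unfold KK; positivity

lemma rho2_pos (ℓ : ℝ) (x : ℝ × ℝ) : 0 < rho2 ℓ x := by unfold rho2; positivity

lemma rho2_le (ℓ : ℝ) (x y : ℝ × ℝ) (h1 : |x.1 - y.1| ≤ 1) (h2 : |x.2 - y.2| ≤ 1) :
    rho2 ℓ x ≤ KK ℓ * rho2 ℓ y := by
  rw [abs_le] at h1 h2
  unfold rho2 KK
  have hA : 1 + x.1 ^ 2 + x.2 ^ 2 ≤ 5 * (1 + y.1 ^ 2 + y.2 ^ 2) := by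
    nlinarith [sq_nonneg (x.1 - 2 * y.1), sq_nonneg (x.2 - 2 * y.2)]
  have hB : 1 + y.1 ^ 2 + y.2 ^ 2 ≤ 5 * (1 + x.1 ^ 2 + x.2 ^ 2) := by
    nlinarith [sq_nonneg (y.1 - 2 * x.1), sq_nonneg (y.2 - 2 * x.2)]
  have pA : 0 < 1 + x.1 ^ 2 + x.2 ^ 2 := by positivity
  have pB : 0 < 1 + y.1 ^ 2 + y.2 ^ 2 := by positivity
  generalize 1 + x.1 ^ 2 + x.2 ^ 2 = A at *
  generalize 1 + y.1 ^ 2 + y.2 ^ 2 = B at *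
  rcases le_total 0 ℓ with hl | hl
  · rw [abs_of_nonneg hl]
    have e : (5:ℝ) ^ (ℓ / 2) = (1/5 : ℝ) ^ (-ℓ / 2) := by
      rw [one_div, Real.inv_rpow (by norm_num), ← Real.rpow_neg (by norm_num)]; congr 1; ring
    rw [e, ← Real.mul_rpow (by norm_num) pB.le]
    exact Real.rpow_le_rpow_of_nonpos (by positivity) (by linarith) (by linarith)
  · rw [abs_of_nonpos hl, ← Real.mul_rpow (by norm_num) pB.le]
    exact Real.rpow_le_rpow pA.le hA (by linarith)

lemma measurable_rho2 (ℓ : ℝ) : Measurable (rho2 ℓ) := by unfold rho2; fun_prop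

lemma lpNormR2_eq (p ℓ : ℝ) (hp : 1 ≤ p) (g : ℝ × ℝ → ℝ) :
    lpNormR2 p ℓ g = eLpNorm (fun x => rho2 ℓ x * g x) (ENNReal.ofReal p) volume := by
  have h0 : 0 < p := by linarith
  rw [eLpNorm_eq_lintegral_rpow_enorm_toReal (by simpa using h0) (by simp),
    ENNReal.toReal_ofReal h0.le]
  unfold lpNormR2
  congr 1
  refine lintegral_congr fun x => ?_
  rw [← ENNReal.ofReal_rpow_of_nonneg (abs_nonneg _) h0.le, Real.enorm_eq_ofReal_abs]

lemma lpNormR2_add_le (p ℓ : ℝ) (hp : 1 ≤ p) (f g : ℝ × ℝ → ℝ) (hf : Measurable f)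
    (hg : Measurable g) :
    lpNormR2 p ℓ (fun x => f x + g x) ≤ lpNormR2 p ℓ f + lpNormR2 p ℓ g := by
  simp only [lpNormR2_eq p ℓ hp, mul_add]
  have := measurable_rho2 ℓ
  exact eLpNorm_add_le (f := fun x => rho2 ℓ x * f x) (g := fun x => rho2 ℓ x * g x)
    (by fun_prop) (by fun_prop) (by simpa using hp)

lemma lpNormR2_mono (p ℓ : ℝ) (hp : 1 ≤ p) (f g : ℝ × ℝ → ℝ) (h : ∀ x, |f x| ≤ |g x|) :
    lpNormR2 p ℓ f ≤ lpNormR2 p ℓ g := by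
  simp only [lpNormR2_eq p ℓ hp]
  refine eLpNorm_mono fun x => ?_
  simp only [Real.norm_eq_abs, abs_mul]
  exact mul_le_mul_of_nonneg_left (h x) (abs_nonneg _)

lemma lpNormR2_abs (p ℓ : ℝ) (g : ℝ × ℝ → ℝ) :
    lpNormR2 p ℓ (fun x => |g x|) = lpNormR2 p ℓ g := by
  unfold lpNormR2; simp [abs_mul]

lemma lpNormR2_sum_le (p ℓ : ℝ) (hp : 1 ≤ p) {ι : Type*} (S : Finset ι) (F : ι → ℝ × ℝ → ℝ)
    (hF : ∀ i, Measurable (F i)) :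
    lpNormR2 p ℓ (fun x => ∑ i ∈ S, F i x) ≤ ∑ i ∈ S, lpNormR2 p ℓ (F i) := by
  classical
  induction S using Finset.induction_on with
  | empty =>
    have h0 : 0 < p := by linarith
    simp [lpNormR2, h0.ne', h0]
  | insert a S ha ih =>
    simp only [Finset.sum_insert ha]
    refine (lpNormR2_add_le p ℓ hp (F a) _ (hF a) ?_).trans (by gcongr)
    exact Finset.measurable_sum _ fun i _ => hF i

lemma lpNormR2_sub_comm (p ℓ : ℝ) (f g : ℝ × ℝ → ℝ) :
    lpNormR2 p ℓ (fun x => f x - g x) = lpNormR2 p ℓ (fun x => g x - f x) := by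
  unfold lpNormR2; simp [abs_mul, abs_sub_comm]

lemma pow_bound (p a b K u : ℝ) (hp : 1 ≤ p) (ha : 0 < a) (hb : 0 < b) (hK : 0 < K)
    (h : a ≤ K * b) :
    ENNReal.ofReal (|a * u| ^ p) ≤ ENNReal.ofReal (K ^ p) * ENNReal.ofReal (|b * u| ^ p) := by
  rw [← ENNReal.ofReal_mul (by positivity), ← Real.mul_rpow hK.le (abs_nonneg _)]
  apply ENNReal.ofReal_le_ofReal
  apply Real.rpow_le_rpow (abs_nonneg _) _ (by linarith)
  rw [abs_mul, abs_mul, abs_of_pos ha, abs_of_pos hb, ← mul_assoc]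
  gcongr

lemma root_bound (p K : ℝ) (X Y : ℝ≥0∞) (hp : 1 ≤ p) (hK : 0 < K)
    (h : X ≤ ENNReal.ofReal (K ^ p) * Y) :
    X ^ (1 / p) ≤ ENNReal.ofReal K * Y ^ (1 / p) := by
  have h0 : 0 < p := by linarith
  refine (ENNReal.rpow_le_rpow h (by positivity)).trans ?_
  rw [ENNReal.mul_rpow_of_nonneg _ _ (by positivity),
    ENNReal.ofReal_rpow_of_nonneg (by positivity) (by positivity), ← Real.rpow_mul hK.le,
    mul_one_div_cancel h0.ne', Real.rpow_one]

lemma lpNormR2_translate (p ℓ : ℝ) (hp : 1 ≤ p) (g : ℝ × ℝ → ℝ) (h : ℝ × ℝ)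
    (h1 : |h.1| ≤ 1) (h2 : |h.2| ≤ 1) :
    lpNormR2 p ℓ (fun x => g (x + h)) ≤ ENNReal.ofReal (KK ℓ) * lpNormR2 p ℓ g := by
  unfold lpNormR2
  apply root_bound p _ _ _ hp (KK_pos ℓ)
  rw [← lintegral_add_right_eq_self (fun x => ENNReal.ofReal (|rho2 ℓ x * g x| ^ p)) h,
    ← lintegral_const_mul' _ _ (by simp)]
  refine lintegral_mono fun x => ?_
  refine pow_bound p _ _ _ _ hp (rho2_pos _ _) (rho2_pos _ _) (KK_pos ℓ) (rho2_le _ _ _ ?_ ?_)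
  · simpa using h1
  · simpa using h2

noncomputable def cel (ε : ℝ) (x : ℝ × ℝ) : ℤ × ℤ := (cellIdx ε x.1, cellIdx ε x.2)

lemma measurable_cel (ε : ℝ) : Measurable (cel ε) := by
  unfold cel cellIdx
  refine Measurable.prodMk ?_ ?_
  · exact Int.measurable_ceil.comp (by fun_prop)
  · exact Int.measurable_ceil.comp (by fun_prop)

lemma measurable_Eeps (ε : ℝ) (f : ℤ × ℤ → ℝ) : Measurable (Eeps ε f) :=
  (measurable_of_countable f).comp (measurable_cel ε)

lemma cellIdx_eq_iff (ε : ℝ) (hε : 0 < ε) (t : ℝ) (n : ℤ) :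
    cellIdx ε t = n ↔ t ∈ Set.Ioc (ε * n - ε / 2) (ε * n + ε / 2) := by
  unfold cellIdx
  rw [Int.ceil_eq_iff, Set.mem_Ioc]
  have e : t = ε * (t / ε) := by field_simp
  generalize t / ε = u at e
  subst e
  constructor
  · rintro ⟨a, b⟩; constructor <;> nlinarith
  · rintro ⟨a, b⟩
    constructor
    · by_contra hc; push Not at hc; nlinarith
    · by_contra hc; push Not at hc; nlinarith

lemma vol_cel (ε : ℝ) (hε : 0 < ε) (n : ℤ × ℤ) :
    volume (cel ε ⁻¹' {n}) = ENNReal.ofReal (ε ^ 2) := by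
  have : cel ε ⁻¹' {n} = Set.Ioc (ε * n.1 - ε / 2) (ε * n.1 + ε / 2) ×ˢ
      Set.Ioc (ε * n.2 - ε / 2) (ε * n.2 + ε / 2) := by
    ext x
    rw [Set.mem_preimage, Set.mem_singleton_iff, Set.mem_prod, ← cellIdx_eq_iff ε hε,
      ← cellIdx_eq_iff ε hε, cel, Prod.ext_iff]
  rw [this, Measure.volume_eq_prod, Measure.prod_prod, Real.volume_Ioc, Real.volume_Ioc,
    ← ENNReal.ofReal_mul (by linarith)]
  congr 1; ring

lemma lpNormR2_Eeps (p ℓ ε : ℝ) (hp : 1 ≤ p) (hε : 0 < ε) (hε1 : ε ≤ 1) (f : ℤ × ℤ → ℝ) :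
    lpNormR2 p ℓ (Eeps ε f) ≤ ENNReal.ofReal (KK ℓ) * lpNormLat p ℓ ε f := by
  unfold lpNormR2 lpNormLat
  apply root_bound p _ _ _ hp (KK_pos ℓ)
  have key : ∫⁻ x, (fun n => ENNReal.ofReal (|rho2 ℓ (pt ε n) * f n| ^ p)) (cel ε x)
      = ENNReal.ofReal (ε ^ 2) * ∑' n : ℤ × ℤ, ENNReal.ofReal (|rho2 ℓ (pt ε n) * f n| ^ p) := by
    rw [← lintegral_map (f := fun n : ℤ × ℤ => ENNReal.ofReal (|rho2 ℓ (pt ε n) * f n| ^ p))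
      (measurable_of_countable _) (measurable_cel ε), lintegral_countable',
      ← ENNReal.tsum_mul_left]
    refine tsum_congr fun n => ?_
    rw [Measure.map_apply (measurable_cel ε) (measurableSet_singleton n), vol_cel ε hε, mul_comm]
  rw [← key, ← lintegral_const_mul' _ _ (by simp)]
  refine lintegral_mono fun x => ?_
  have a1 := (cellIdx_eq_iff ε hε x.1 _).1 rfl
  have a2 := (cellIdx_eq_iff ε hε x.2 _).1 rfl
  rw [Set.mem_Ioc] at a1 a2
  refine pow_bound p _ _ _ _ hp (rho2_pos _ _) (rho2_pos _ _) (KK_pos ℓ) (rho2_le _ _ _ ?_ ?_)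
  · simp only [pt, cel]; rw [abs_le]; constructor <;> linarith
  · simp only [pt, cel]; rw [abs_le]; constructor <;> linarith

lemma latDiffNorm_eq (p ℓ ε : ℝ) (f : ℤ × ℤ → ℝ) (k : ℤ × ℤ) :
    latDiffNorm p ℓ ε f k = lpNormLat p ℓ ε (fun n => f (n + k) - f n) := by
  unfold latDiffNorm lpNormLat
  congr 3
  funext n
  rw [abs_mul, Real.mul_rpow (abs_nonneg _) (abs_nonneg _), abs_of_pos (rho2_pos _ _)]

lemma cellIdx_add (ε t h : ℝ) :
    cellIdx ε (t + h) - cellIdx ε t ∈ ({⌊h / ε⌋, ⌊h / ε⌋ + 1} : Finset ℤ) := by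
  unfold cellIdx
  rw [add_div]
  have a := Int.floor_le (h / ε)
  have b := Int.lt_floor_add_one (h / ε)
  have c := Int.le_ceil (t / ε - 1 / 2)
  have d := Int.ceil_lt_add_one (t / ε - 1 / 2)
  have e := Int.le_ceil (t / ε + h / ε - 1 / 2)
  have f := Int.ceil_lt_add_one (t / ε + h / ε - 1 / 2)
  generalize ⌊h / ε⌋ = A at *
  generalize ⌈t / ε - 1 / 2⌉ = B at *
  generalize ⌈t / ε + h / ε - 1 / 2⌉ = C at *
  have i1 : A + B - 1 < C := by
    have : (A + B - 1 : ℝ) < C := by linarith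
    exact_mod_cast this
  have i2 : C < A + B + 2 := by
    have : (C : ℝ) < A + B + 2 := by linarith
    exact_mod_cast this
  simp only [Finset.mem_insert, Finset.mem_singleton]
  omega

/-- The four possible lattice shifts. -/
noncomputable def shifts (ε : ℝ) (h : ℝ × ℝ) : Finset (ℤ × ℤ) :=
  ({⌊h.1 / ε⌋, ⌊h.1 / ε⌋ + 1} : Finset ℤ) ×ˢ ({⌊h.2 / ε⌋, ⌊h.2 / ε⌋ + 1} : Finset ℤ)

lemma card_shifts (ε : ℝ) (h : ℝ × ℝ) : (shifts ε h).card ≤ 4 := by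
  unfold shifts
  rw [Finset.card_product]
  exact Nat.mul_le_mul (Finset.card_le_two) (Finset.card_le_two) 

lemma Eeps_diff (ε : ℝ) (f : ℤ × ℤ → ℝ) (h x : ℝ × ℝ) :
    |Eeps ε f (x + h) - Eeps ε f x| ≤
      ∑ k ∈ shifts ε h, |Eeps ε (fun n => f (n + k) - f n) x| := by
  have hk : (cellIdx ε (x.1 + h.1) - cellIdx ε x.1, cellIdx ε (x.2 + h.2) - cellIdx ε x.2)
      ∈ shifts ε h := Finset.mem_product.2 ⟨cellIdx_add _ _ _, cellIdx_add _ _ _⟩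
  refine le_trans (le_of_eq ?_) (Finset.single_le_sum
    (f := fun k => |Eeps ε (fun n => f (n + k) - f n) x|) (fun _ _ => abs_nonneg _) hk)
  simp [Eeps]

lemma abs_le_en2 (h : ℝ × ℝ) : |h.1| ≤ en2 h ∧ |h.2| ≤ en2 h := by
  unfold en2
  constructor <;> apply Real.abs_le_sqrt <;> nlinarith [sq_nonneg h.1, sq_nonneg h.2]

lemma floor_near (ε t : ℝ) (hε : 0 < ε) (k : ℤ) (hk : k ∈ ({⌊t / ε⌋, ⌊t / ε⌋ + 1} : Finset ℤ)) :
    |ε * k - t| ≤ ε := by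
  have a := Int.floor_le (t / ε)
  have b := Int.lt_floor_add_one (t / ε)
  have e : t = ε * (t / ε) := by field_simp
  generalize t / ε = u at *
  subst e
  rw [← mul_sub, abs_mul, abs_of_pos hε]
  simp only [Finset.mem_insert, Finset.mem_singleton] at hk
  have : |(k:ℝ) - u| ≤ 1 := by
    rw [abs_le]
    rcases hk with rfl | rfl <;> push_cast <;> constructor <;> linarith
  nlinarith

lemma shift_size (ε : ℝ) (h : ℝ × ℝ) (hε : 0 < ε) (hh : ε ≤ en2 h / 4) (k : ℤ × ℤ)
    (hk : k ∈ shifts ε h) : 0 < en2 (pt ε k) ∧ en2 (pt ε k) ≤ 2 * en2 h := by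
  obtain ⟨k1, k2⟩ := Finset.mem_product.1 hk
  have b1 := floor_near ε _ hε _ k1
  have b2 := floor_near ε _ hε _ k2
  have hH : 0 < en2 h := by linarith
  have hsq : en2 h ^ 2 = h.1 ^ 2 + h.2 ^ 2 := Real.sq_sqrt (by positivity)
  generalize en2 h = H at *
  have s1 : (ε * k.1 - h.1) ^ 2 ≤ H ^ 2 / 16 := by
    rw [abs_le] at b1; nlinarith
  have s2 : (ε * k.2 - h.2) ^ 2 ≤ H ^ 2 / 16 := by
    rw [abs_le] at b2; nlinarith
  unfold en2 pt
  simp only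
  generalize ε * (k.1 : ℝ) = a at *
  generalize ε * (k.2 : ℝ) = b at *
  constructor
  · apply Real.sqrt_pos.2
    nlinarith [sq_nonneg (h.1 - 2 * a), sq_nonneg (h.2 - 2 * b), sq_nonneg a, sq_nonneg b]
  · apply Real.sqrt_le_iff.2
    refine ⟨by positivity, ?_⟩
    nlinarith [sq_nonneg (a - 2 * h.1), sq_nonneg (b - 2 * h.2), sq_nonneg h.1, sq_nonneg h.2]

lemma latDiff_le (s p ℓ ε : ℝ) (f : ℤ × ℤ → ℝ) (k : ℤ × ℤ) (h0 : 0 < en2 (pt ε k))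
    (h1 : en2 (pt ε k) ≤ 1) :
    latDiffNorm p ℓ ε f k ≤ ENNReal.ofReal (en2 (pt ε k) ^ s) * latWNorm s p ℓ ε f := by
  have : ENNReal.ofReal (en2 (pt ε k) ^ (-s)) * latDiffNorm p ℓ ε f k ≤ latWNorm s p ℓ ε f := by
    unfold latWNorm
    refine le_trans ?_ le_add_self
    exact le_iSup₂ (f := fun (k : ℤ × ℤ) (_ : 0 < en2 (pt ε k) ∧ en2 (pt ε k) ≤ 1) =>
      ENNReal.ofReal (en2 (pt ε k) ^ (-s)) * latDiffNorm p ℓ ε f k) k ⟨h0, h1⟩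
  calc latDiffNorm p ℓ ε f k = ENNReal.ofReal (en2 (pt ε k) ^ s) *
        (ENNReal.ofReal (en2 (pt ε k) ^ (-s)) * latDiffNorm p ℓ ε f k) := by
        rw [← mul_assoc, ← ENNReal.ofReal_mul (by positivity), ← Real.rpow_add h0]; simp
    _ ≤ _ := by gcongr

lemma Eeps_diff_norm (s p ℓ ε : ℝ) (hs0 : 0 < s) (hs1 : s ≤ 1) (hp : 1 ≤ p) (f : ℤ × ℤ → ℝ)
    (h : ℝ × ℝ) (hε : 0 < ε) (hε1 : ε ≤ 1) (hh : ε ≤ en2 h / 4) (hh2 : en2 h ≤ 1 / 2) :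
    lpNormR2 p ℓ (fun x => Eeps ε f (x + h) - Eeps ε f x) ≤
      ENNReal.ofReal (8 * KK ℓ * en2 h ^ s) * latWNorm s p ℓ ε f := by
  have hH : 0 < en2 h := by linarith
  have hK := KK_pos ℓ
  refine (lpNormR2_mono p ℓ hp _ (fun x => ∑ k ∈ shifts ε h,
    |Eeps ε (fun n => f (n + k) - f n) x|) fun x => (Eeps_diff ε f h x).trans (le_abs_self _)).trans ?_
  refine (lpNormR2_sum_le p ℓ hp _ _ fun k => (measurable_Eeps _ _).abs).trans ?_
  have each : ∀ k ∈ shifts ε h, lpNormR2 p ℓ (fun x => |Eeps ε (fun n => f (n + k) - f n) x|) ≤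
      ENNReal.ofReal (2 * KK ℓ * en2 h ^ s) * latWNorm s p ℓ ε f := by
    intro k hk
    obtain ⟨z1, z2⟩ := shift_size ε h hε hh k hk
    rw [lpNormR2_abs]
    refine (lpNormR2_Eeps p ℓ ε hp hε hε1 _).trans ?_
    rw [← latDiffNorm_eq]
    refine (mul_le_mul_right (latDiff_le s p ℓ ε f k z1 (by linarith)) _).trans ?_
    rw [← mul_assoc, ← ENNReal.ofReal_mul hK.le]
    refine mul_le_mul_left (ENNReal.ofReal_le_ofReal ?_) _
    have : en2 (pt ε k) ^ s ≤ 2 * en2 h ^ s := by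
      refine (Real.rpow_le_rpow z1.le z2 hs0.le).trans ?_
      rw [Real.mul_rpow (by norm_num) hH.le]
      gcongr
      exact (Real.rpow_le_rpow_of_exponent_le (by norm_num) hs1).trans (by simp)
    nlinarith
  refine (Finset.sum_le_card_nsmul _ _ _ each).trans ?_
  rw [nsmul_eq_mul, ← mul_assoc]
  gcongr
  have c4 : ((shifts ε h).card : ℝ≥0∞) ≤ ENNReal.ofReal 4 := by
    rw [ENNReal.ofReal_ofNat]; exact_mod_cast card_shifts ε h
  refine (mul_le_mul_left c4 _).trans ?_
  rw [← ENNReal.ofReal_mul (by norm_num)]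
  apply le_of_eq; congr 1; ring

/-- Theorem 2.19 (first part): let `0 < s ≤ 1`, `p ∈ [1,∞)`, `ℓ ∈ ℝ`. There is a
constant `C > 0` depending only on `s, p, ℓ` such that whenever `ε_n ∈ (0,1]` with
`ε_n → 0`, `f_n : ε_nℤ² → ℝ` with `M := sup_n ‖f_n‖_{W^{s,p}_ℓ(ε_nℤ²)} < ∞`, and
`E^{ε_n} f_n → f` in `L^p_ℓ(ℝ²)`, the limit `f` satisfies
`‖f‖_{L^p_ℓ} + sup_{0<|h|≤1} |h|^{-s} ‖f(·+h) − f‖_{L^p_ℓ} ≤ C M`; in particular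
`f ∈ B^s_{p,∞,ℓ}(ℝ²)`. -/
theorem stmt_10 (s p ℓ : ℝ) (hs0 : 0 < s) (hs1 : s ≤ 1) (hp : 1 ≤ p) :
    ∃ C : ℝ, 0 < C ∧
      ∀ ε : ℕ → ℝ, (∀ n, ε n ∈ Set.Ioc (0 : ℝ) 1) →
        Filter.Tendsto ε Filter.atTop (nhds 0) →
        ∀ (f : ℕ → ℤ × ℤ → ℝ) (g : ℝ × ℝ → ℝ), Measurable g →
          (⨆ n, latWNorm s p ℓ (ε n) (f n)) < ⊤ →
          Filter.Tendsto (fun n => lpNormR2 p ℓ (fun x => Eeps (ε n) (f n) x - g x))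
            Filter.atTop (nhds 0) →
          besovDiffNormR2 s p ℓ g ≤
            ENNReal.ofReal C * ⨆ n, latWNorm s p ℓ (ε n) (f n) := by
  have hK := KK_pos ℓ
  refine ⟨KK ℓ + (1 + KK ℓ) * (8 * KK ℓ), by positivity, ?_⟩
  intro ε hε hε0 f g hg hM hlim
  set M := ⨆ n, latWNorm s p ℓ (ε n) (f n) with hMdef
  have hle : ∀ n, latWNorm s p ℓ (ε n) (f n) ≤ M := fun n => le_iSup (fun n => latWNorm s p ℓ (ε n) (f n)) n
  set d : ℕ → ℝ≥0∞ := fun n => lpNormR2 p ℓ (fun x => Eeps (ε n) (f n) x - g x) with hd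
  have mE : ∀ n, Measurable (Eeps (ε n) (f n)) := fun n => measurable_Eeps _ _
  have part1 : lpNormR2 p ℓ g ≤ ENNReal.ofReal (KK ℓ) * M := by
    have hb : ∀ n, lpNormR2 p ℓ g ≤ d n + ENNReal.ofReal (KK ℓ) * M := by
      intro n
      have e : g = fun x => (g x - Eeps (ε n) (f n) x) + Eeps (ε n) (f n) x := by
        funext x; ring
      conv_lhs => rw [e]
      refine (lpNormR2_add_le p ℓ hp _ _ (hg.sub (mE n)) (mE n)).trans ?_
      have e2 : lpNormR2 p ℓ (g - Eeps (ε n) (f n)) = d n := lpNormR2_sub_comm p ℓ _ _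
      rw [e2]
      gcongr
      refine (lpNormR2_Eeps p ℓ (ε n) hp (hε n).1 (hε n).2 _).trans ?_
      gcongr
      exact le_trans le_self_add (hle n)
    have := hlim.add_const (ENNReal.ofReal (KK ℓ) * M)
    rw [zero_add] at this
    exact ge_of_tendsto' this hb
  have part2 : ∀ h : ℝ × ℝ, 0 < en2 h → en2 h ≤ 1 / 2 →
      lpNormR2 p ℓ (fun x => g (x + h) - g x) ≤ ENNReal.ofReal (8 * KK ℓ * en2 h ^ s) * M := by
    intro h h0 h1
    obtain ⟨a1, a2⟩ := abs_le_en2 h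
    have hb : ∀ᶠ n in Filter.atTop, lpNormR2 p ℓ (fun x => g (x + h) - g x) ≤
        (ENNReal.ofReal (KK ℓ) * d n + d n) + ENNReal.ofReal (8 * KK ℓ * en2 h ^ s) * M := by
      have hev : ∀ᶠ n in Filter.atTop, ε n < en2 h / 4 :=
        hε0.eventually_lt_const (by positivity)
      filter_upwards [hev] with n hn
      have mS : Measurable fun x : ℝ × ℝ => x + h := by fun_prop
      have e : (fun x => g (x + h) - g x) = fun x =>
          ((g (x + h) - Eeps (ε n) (f n) (x + h)) + (Eeps (ε n) (f n) x - g x)) +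
          (Eeps (ε n) (f n) (x + h) - Eeps (ε n) (f n) x) := by
        funext x; ring
      have mg : Measurable fun x => g (x + h) := hg.comp mS
      have mEh : Measurable fun x => Eeps (ε n) (f n) (x + h) := (mE n).comp mS
      rw [e]
      refine (lpNormR2_add_le p ℓ hp _ _ ((mg.sub mEh).add ((mE n).sub hg))
        (mEh.sub (mE n))).trans ?_
      gcongr
      · refine (lpNormR2_add_le p ℓ hp _ _ (mg.sub mEh) ((mE n).sub hg)).trans ?_
        refine add_le_add ?_ le_rfl
        refine (lpNormR2_translate p ℓ hp (fun x => g x - Eeps (ε n) (f n) x) h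
          (by linarith) (by linarith)).trans ?_
        rw [lpNormR2_sub_comm]
      · refine (Eeps_diff_norm s p ℓ (ε n) hs0 hs1 hp _ h (hε n).1 (hε n).2 hn.le h1).trans ?_
        gcongr
        exact hle n
    have t1 := ENNReal.Tendsto.const_mul (a := ENNReal.ofReal (KK ℓ)) hlim
      (Or.inr ENNReal.ofReal_ne_top)
    have := (t1.add hlim).add_const (ENNReal.ofReal (8 * KK ℓ * en2 h ^ s) * M)
    simp only [mul_zero, zero_add] at this
    exact ge_of_tendsto this hb
  unfold besovDiffNormR2
  rw [ENNReal.ofReal_add hK.le (by positivity), add_mul]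
  refine add_le_add part1 (iSup₂_le fun h hh => ?_)
  obtain ⟨h0, h1⟩ := hh
  set h' : ℝ × ℝ := (h.1 / 2, h.2 / 2) with hh'
  have hen : en2 h' = en2 h / 2 := by
    simp only [en2, hh']
    rw [show (h.1 / 2) ^ 2 + (h.2 / 2) ^ 2 = (h.1 ^ 2 + h.2 ^ 2) / 2 ^ 2 by ring,
      Real.sqrt_div' _ (by norm_num), Real.sqrt_sq (by norm_num)]
  have hadd : h' + h' = h := by ext <;> simp [hh']
  have h0' : 0 < en2 h' := by linarith
  have P := part2 h' (by linarith) (by linarith)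
  obtain ⟨a1, a2⟩ := abs_le_en2 h'
  have mS : Measurable fun x : ℝ × ℝ => x + h' := by fun_prop
  have mg : Measurable fun x => g (x + h') := hg.comp mS
  have D : lpNormR2 p ℓ (fun x => g (x + h) - g x) ≤
      ENNReal.ofReal ((1 + KK ℓ) * (8 * KK ℓ)) * (ENNReal.ofReal (en2 h ^ s) * M) := by
    have e : (fun x => g (x + h) - g x) = fun x =>
        (g (x + h' + h') - g (x + h')) + (g (x + h') - g x) := by
      funext x; rw [add_assoc, hadd]; ring
    rw [e]
    refine (lpNormR2_add_le p ℓ hp _ _ ((mg.comp mS).sub mg) (mg.sub hg)).trans ?_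
    refine (add_le_add (lpNormR2_translate p ℓ hp (fun x => g (x + h') - g x) h'
          (by linarith) (by linarith)) le_rfl).trans ?_
    refine (add_le_add (mul_le_mul_right P _) P).trans ?_
    rw [← mul_assoc, ← mul_assoc, ← add_mul, ← ENNReal.ofReal_mul hK.le,
      ← ENNReal.ofReal_add (by positivity) (by positivity), ← ENNReal.ofReal_mul (by positivity)]
    gcongr
    have : en2 h' ^ s ≤ en2 h ^ s :=
      Real.rpow_le_rpow (by linarith) (by linarith) hs0.le
    calc _ = (1 + KK ℓ) * (8 * KK ℓ) * en2 h' ^ s := by ring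
      _ ≤ _ := by gcongr
  refine (mul_le_mul_right D _).trans (le_of_eq ?_)
  rw [mul_left_comm, ← mul_assoc (ENNReal.ofReal (en2 h ^ (-s))),
    ← ENNReal.ofReal_mul (by positivity), ← Real.rpow_add h0]
  simp
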